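/- Let Σ and Σ′ be two signed graphs with the same underlying graph Γ. Then Σ and Σ′ have exactly the same set of positive circles if and only if Σ′ is obtained from Σ by switching, i.e. Σ′ = Σ^ζ for some function ζ : V → {+1, −1}. -/

import Mathlib

/-!
Signs lie in a group of exponent two, so `σ` and `σ'` agree on every circle exactly when all circles
of the product signature `σ * σ'` are positive. Replacing a walk by a path cuts off circles and
edges traversed back and forth, so positivity of circles passes to all closed walks. Walk signs then
depend only on the endpoints, and the sign of a walk from a root of each component is a switching
function.
-/

/-- The sign of a walk in a signed graph: the product of the signs of its edges. -/
def walkSign {V : Type*} (G : SimpleGraph V) (σ : Sym2 V → ℤˣ) {u v : V}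
    (w : G.Walk u v) : ℤˣ :=
  (w.edges.map σ).prod

/-- The signature obtained from `σ` by switching with `ζ : V → ℤˣ`:
`σ^ζ(uv) = ζ(u) σ(uv) ζ(v)`. -/
def sgSwitch {V : Type*} (σ : Sym2 V → ℤˣ) (ζ : V → ℤˣ) (e : Sym2 V) : ℤˣ :=
  Sym2.lift ⟨fun u v => ζ u * ζ v, fun u v => mul_comm (ζ u) (ζ v)⟩ e * σ e

section

open SimpleGraph

variable {V : Type*} {G : SimpleGraph V} {σ σ' : Sym2 V → ℤˣ} {u v w : V}

@[simp]
lemma walkSign_nil : walkSign G σ (.nil : G.Walk u u) = 1 := rfl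

@[simp]
lemma walkSign_cons (h : G.Adj u v) (p : G.Walk v w) :
    walkSign G σ (.cons h p) = σ s(u, v) * walkSign G σ p := by
  simp [walkSign]

@[simp]
lemma walkSign_append (p : G.Walk u v) (q : G.Walk v w) :
    walkSign G σ (p.append q) = walkSign G σ p * walkSign G σ q := by
  simp [walkSign]

@[simp]
lemma walkSign_concat (p : G.Walk u v) (h : G.Adj v w) :
    walkSign G σ (p.concat h) = walkSign G σ p * σ s(v, w) := by
  simp [Walk.concat_eq_append]

@[simp]
lemma walkSign_reverse (p : G.Walk u v) : walkSign G σ p.reverse = walkSign G σ p := by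
  simp [walkSign, List.prod_reverse]

@[simp]
lemma walkSign_copy {u' v' : V} (p : G.Walk u v) (hu : u = u') (hv : v = v') :
    walkSign G σ (p.copy hu hv) = walkSign G σ p := by
  simp [walkSign]

@[simp]
lemma walkSign_one (p : G.Walk u v) : walkSign G 1 p = 1 := by
  induction p <;> simp_all

lemma walkSign_mul (p : G.Walk u v) :
    walkSign G (σ * σ') p = walkSign G σ p * walkSign G σ' p :=
  List.prod_map_mul

lemma walkSign_congr (h : ∀ e ∈ G.edgeSet, σ e = σ' e) (p : G.Walk u v) :
    walkSign G σ p = walkSign G σ' p :=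
  congrArg List.prod (List.map_congr_left fun e he => h e (p.edges_subset_edgeSet he))

@[simp]
lemma sgSwitch_mk (ζ : V → ℤˣ) (u v : V) :
    sgSwitch σ ζ s(u, v) = ζ u * ζ v * σ s(u, v) := rfl

lemma walkSign_sgSwitch (ζ : V → ℤˣ) (p : G.Walk u v) :
    walkSign G (sgSwitch σ ζ) p = ζ u * walkSign G σ p * ζ v := by
  induction p with
  | nil => simp [Int.units_mul_self]
  | @cons u x v h p ih =>
    calc walkSign G (sgSwitch σ ζ) (.cons h p)
        = ζ x * ζ x * (ζ u * (σ s(u, x) * walkSign G σ p) * ζ v) := by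
          rw [walkSign_cons, ih, sgSwitch_mk]
          ac_rfl
      _ = ζ u * walkSign G σ (.cons h p) * ζ v := by
          rw [Int.units_mul_self, one_mul, walkSign_cons]

lemma mul_eq_sgSwitch_one_iff (ζ : V → ℤˣ) (e : Sym2 V) :
    (σ * σ') e = sgSwitch 1 ζ e ↔ σ' e = sgSwitch σ ζ e := by
  rw [Pi.mul_apply, ← eq_inv_mul_iff_mul_eq, Int.units_inv_eq_self]
  simp [sgSwitch, mul_comm (σ e)]

variable (G σ) in
/-- The signed graph `(G, σ)` is balanced: every circle is positive. Circles are encoded as closed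
walks satisfying `SimpleGraph.Walk.IsCycle`. Applied to a product `σ * σ'`, balance compares the
positive circles of two signatures. -/
def IsBalanced : Prop :=
  ∀ ⦃v : V⦄ (c : G.Walk v v), c.IsCycle → walkSign G σ c = 1

lemma isBalanced_mul_iff :
    IsBalanced G (σ * σ') ↔ ∀ ⦃v : V⦄ (c : G.Walk v v), c.IsCycle →
      (walkSign G σ c = 1 ↔ walkSign G σ' c = 1) := by
  have mul_eq_one_iff_agree (a b : ℤˣ) : a * b = 1 ↔ (a = 1 ↔ b = 1) := by
    decide +revert
  simp only [IsBalanced, walkSign_mul, mul_eq_one_iff_agree]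

namespace IsBalanced

lemma walkSign_cons_eq_one (hσ : IsBalanced G σ) (h : G.Adj u v) {p : G.Walk v u}
    (hp : p.IsPath) : walkSign G σ (.cons h p) = 1 := by
  by_cases he : s(u, v) ∈ p.edges
  · have back_and_forth : p = h.symm.toWalk := hp.eq_adj_toWalk_of_mem_edges (Sym2.eq_swap ▸ he)
    simp [back_and_forth, Sym2.eq_swap (a := v), Int.units_mul_self]
  · exact hσ _ ((p.cons_isCycle_iff h).2 ⟨hp, he⟩)

lemma walkSign_bypass [DecidableEq V] (hσ : IsBalanced G σ) (p : G.Walk u v) :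
    walkSign G σ p.bypass = walkSign G σ p := by
  induction p with
  | nil => rfl
  | @cons u x v h p ih =>
    by_cases hu : u ∈ p.bypass.support
    · let loop := Walk.cons h (p.bypass.takeUntil u hu)
      let rest := p.bypass.dropUntil u hu
      have loop_sign : walkSign G σ loop = 1 :=
        hσ.walkSign_cons_eq_one h (p.bypass_isPath.takeUntil hu)
      have loop_append_rest : loop.append rest = .cons h p.bypass := by
        simp [loop, rest]
      calc walkSign G σ (Walk.cons h p).bypass
          = walkSign G σ rest := by simp [Walk.bypass, hu, rest]
        _ = walkSign G σ (loop.append rest) := by rw [walkSign_append, loop_sign, one_mul]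
        _ = walkSign G σ (.cons h p) := by
          rw [loop_append_rest, walkSign_cons, walkSign_cons, ih]
    · simp [Walk.bypass, hu, ih]

lemma walkSign_eq_one (hσ : IsBalanced G σ) (p : G.Walk u u) : walkSign G σ p = 1 := by
  classical
  rw [← hσ.walkSign_bypass, (Walk.isPath_iff_nil.1 p.bypass_isPath).eq_nil, walkSign_nil]

lemma walkSign_eq_walkSign (hσ : IsBalanced G σ) (p q : G.Walk u v) :
    walkSign G σ p = walkSign G σ q := by
  have h := hσ.walkSign_eq_one (p.append q.reverse)
  rwa [walkSign_append, walkSign_reverse, mul_eq_one_iff_eq_inv, Int.units_inv_eq_self] at h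

lemma exists_eq_sgSwitch_one (hσ : IsBalanced G σ) :
    ∃ ζ : V → ℤˣ, ∀ e ∈ G.edgeSet, σ e = sgSwitch 1 ζ e := by
  let root (v : V) : V := (G.connectedComponentMk v).out
  have root_reachable (v : V) : G.Reachable (root v) v :=
    ConnectedComponent.exact (Quot.out_eq (G.connectedComponentMk v))
  let p (v : V) : G.Walk (root v) v := (root_reachable v).some
  refine ⟨fun v => walkSign G σ (p v), Sym2.ind fun u v (h : G.Adj u v) => ?_⟩
  have root_eq : root u = root v :=
    congrArg Quot.out (ConnectedComponent.sound h.reachable)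
  have sign_step : walkSign G σ (p v) = walkSign G σ (p u) * σ s(u, v) := by
    simpa using hσ.walkSign_eq_walkSign (p v) (((p u).concat h).copy root_eq rfl)
  simp [sign_step, ← mul_assoc, Int.units_mul_self]

end IsBalanced

lemma isBalanced_iff_exists_eq_sgSwitch_one :
    IsBalanced G σ ↔ ∃ ζ : V → ℤˣ, ∀ e ∈ G.edgeSet, σ e = sgSwitch 1 ζ e := by
  refine ⟨IsBalanced.exists_eq_sgSwitch_one, fun ⟨ζ, hζ⟩ v c _ => ?_⟩
  calc walkSign G σ c = ζ v * walkSign G 1 c * ζ v := by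
        rw [walkSign_congr hζ, walkSign_sgSwitch]
    _ = 1 := by simp [Int.units_mul_self]

end

theorem same_positive_circles_iff_switching_general {V : Type*}
    (G : SimpleGraph V) (σ σ' : Sym2 V → ℤˣ) :
    (∀ ⦃v : V⦄ (w : G.Walk v v), w.IsCycle →
        (walkSign G σ w = 1 ↔ walkSign G σ' w = 1)) ↔
      ∃ ζ : V → ℤˣ, ∀ e ∈ G.edgeSet, σ' e = sgSwitch σ ζ e := by
  rw [← isBalanced_mul_iff, isBalanced_iff_exists_eq_sgSwitch_one]
  simp only [mul_eq_sgSwitch_one_iff]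

/-- Two signatures on the same underlying graph have the same positive circles iff one
is obtained from the other by switching. -/
theorem same_positive_circles_iff_switching {V : Type*} [Fintype V]
    (G : SimpleGraph V) (σ σ' : Sym2 V → ℤˣ) :
    (∀ ⦃v : V⦄ (w : G.Walk v v), w.IsCycle →
        (walkSign G σ w = 1 ↔ walkSign G σ' w = 1)) ↔
      ∃ ζ : V → ℤˣ, ∀ e ∈ G.edgeSet, σ' e = sgSwitch σ ζ e :=
  same_positive_circles_iff_switching_general G σ σ'
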